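/- Let g(x) = log₂(1 + x/2) and let ⟨⟨·⟩⟩ be a norm on c₀₀ satisfying ⟨⟨x⟩⟩ = max(‖x‖_{ℓ∞}, sup{ (1/g(ℓ)) Σ_{i=1}^ℓ ⟨⟨E_i(x)⟩⟩ : ℓ ≥ 3, E₁ < ⋯ < E_ℓ finite subsets of ℕ }) for all x ∈ c₀₀. For x ∈ c₀₀ and integer ℓ ≥ 3 set ⟨⟨x⟩⟩_ℓ = sup{ (1/g(ℓ)) Σ_{i=1}^ℓ ⟨⟨E_i(x)⟩⟩ : E₁ < ⋯ < E_ℓ }, and for real r ≥ 3 set ⟨⟨⟨x⟩⟩⟩_r = max(‖x‖_{ℓ∞}, sup{ ⟨⟨x⟩⟩_ℓ : ℓ ∈ ℕ, ℓ ≥ r }). Then there is a constant d̃ > 1 such that for every real r ≥ 3 with g(r) > d̃² and every x ∈ c₀₀ with ⟨⟨⟨x⟩⟩⟩_r ≠ ‖x‖_{ℓ∞}: ⟨⟨⟨x⟩⟩⟩_r ≤ (1/(1 − d̃/√g(r))) · sup{ (1/g(ℓ)) Σ_{i=1}^ℓ ⟨⟨⟨E_i(x)⟩⟩⟩_{r^{g(r)}}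 : ℓ ∈ ℕ, ℓ ≥ r, E₁ < ⋯ < E_ℓ }. -/

import Mathlib

abbrev c00 : Type := ℕ →₀ ℝ

noncomputable def flog (x : ℝ) : ℝ := Real.logb 2 (x + 1)

noncomputable def supNorm (x : c00) : ℝ := ⨆ i, |x i|

def proj (E : Finset ℕ) (x : c00) : c00 := x.filter (· ∈ E)

def FLt (A B : Finset ℕ) : Prop := ∀ a ∈ A, ∀ b ∈ B, a < b

def IsNormC00 (N : c00 → ℝ) : Prop :=
  (∀ x, N x = 0 ↔ x = 0) ∧ (∀ x y, N (x + y) ≤ N x + N y) ∧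
    ∀ (a : ℝ) (x : c00), N (a • x) = |a| * N x

def schSet (N : c00 → ℝ) (x : c00) : Set ℝ :=
  {s | ∃ n : ℕ, 2 ≤ n ∧ ∃ E : Fin n → Finset ℕ,
    (∀ i j : Fin n, i < j → FLt (E i) (E j)) ∧
    s = (flog n)⁻¹ * ∑ i, N (proj (E i) x)}

def IsSchlumprechtNorm (N : c00 → ℝ) : Prop :=
  IsNormC00 N ∧ ∀ x : c00, IsLUB (insert (supNorm x) (schSet N x)) (N x)

def IsBlockSeq (x : ℕ → c00) : Prop :=
  (∀ n, x n ≠ 0) ∧ ∀ n, ∀ i ∈ (x n).support, ∀ j ∈ (x (n+1)).support, i < j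

def SeqEquiv (N : c00 → ℝ) (u v : ℕ → c00) : Prop :=
  ∃ c : ℝ, 1 ≤ c ∧ ∀ a : ℕ →₀ ℝ,
    (1 / c) * N (a.sum fun i t => t • u i) ≤ N (a.sum fun i t => t • v i) ∧
    N (a.sum fun i t => t • v i) ≤ c * N (a.sum fun i t => t • u i)

noncomputable def glog (x : ℝ) : ℝ := Real.logb 2 (1 + x / 2)

def gSet (Nb : c00 → ℝ) (x : c00) : Set ℝ :=
  {s | ∃ l : ℕ, 3 ≤ l ∧ ∃ E : Fin l → Finset ℕ,
    (∀ i j : Fin l, i < j → FLt (E i) (E j)) ∧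
    s = (glog l)⁻¹ * ∑ i, Nb (proj (E i) x)}

/-- `Nb` is a norm on `c₀₀` satisfying the implicit equation
`⟨⟨x⟩⟩ = max(‖x‖_{ℓ∞}, sup{(1/g(ℓ)) ∑ᵢ ⟨⟨Eᵢ(x)⟩⟩ : ℓ ≥ 3, E₁ < ⋯ < E_ℓ})`. -/
def IsGNorm (Nb : c00 → ℝ) : Prop :=
  IsNormC00 Nb ∧ ∀ x : c00, IsLUB (insert (supNorm x) (gSet Nb x)) (Nb x)

/-- `⟨⟨x⟩⟩_ℓ` : the supremum of `(1/g(ℓ)) ∑ᵢ ⟨⟨Eᵢ x⟩⟩` over `E₁ < ⋯ < E_ℓ`. -/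
noncomputable def gNormL (Nb : c00 → ℝ) (l : ℕ) (x : c00) : ℝ :=
  sSup {s | ∃ E : Fin l → Finset ℕ, (∀ i j : Fin l, i < j → FLt (E i) (E j)) ∧
    s = (glog l)⁻¹ * ∑ i, Nb (proj (E i) x)}

/-- `⟨⟨⟨x⟩⟩⟩_r = max(‖x‖_{ℓ∞}, sup {⟨⟨x⟩⟩_ℓ : ℓ ∈ ℕ, ℓ ≥ r})`. -/
noncomputable def gNormR (Nb : c00 → ℝ) (r : ℝ) (x : c00) : ℝ :=
  max (supNorm x) (sSup {s | ∃ l : ℕ, r ≤ (l : ℝ) ∧ s = gNormL Nb l x})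

theorem gl_five_quarter {m : ℕ} (h : 3 ≤ m) : 5/4 ≤ glog m := by
  unfold glog
  have h3 : (3:ℝ) ≤ m := by exact_mod_cast h
  rw [Real.le_logb_iff_rpow_le (by norm_num) (by linarith)]
  have h1 : ((2:ℝ) ^ (5/4:ℝ)) ^ (4:ℕ) = 32 := by
    rw [← Real.rpow_natCast, ← Real.rpow_mul (by norm_num)]
    norm_num
  have h2 : (2:ℝ) ^ (5/4:ℝ) ≤ 5/2 := by
    by_contra hc
    push Not at hc
    have := pow_lt_pow_left₀ hc (by norm_num) (n := 4) (by norm_num)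
    rw [h1] at this
    norm_num at this
  linarith

theorem gl_mono {a b : ℝ} (ha : 0 ≤ a) (h : a ≤ b) : glog a ≤ glog b := by
  unfold glog
  exact Real.logb_le_logb_of_le (by norm_num) (by linarith) (by linarith)

theorem gl_R {r : ℝ} (hr : 3 ≤ r) (hg : 1 ≤ glog r) :
    glog (r ^ glog r) ≤ 2 * glog r ^ 2 ∧ r ≤ r ^ glog r := by
  have hR : r ≤ r ^ glog r := by
    calc r = r ^ (1:ℝ) := by simp
      _ ≤ _ := Real.rpow_le_rpow_of_exponent_le (by linarith) hg
  refine ⟨?_, hR⟩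
  have h1 : glog (r ^ glog r) ≤ Real.logb 2 (r ^ glog r) := by
    rw [glog]
    exact Real.logb_le_logb_of_le (by norm_num) (by linarith) (by linarith)
  have h2 : Real.logb 2 (r ^ glog r) = glog r * Real.logb 2 r :=
    Real.logb_rpow_eq_mul_logb_of_pos (by linarith)
  have h3 : Real.logb 2 r ≤ 1 + glog r := by
    have : Real.logb 2 (2 * (1 + r/2)) = 1 + glog r := by
      rw [Real.logb_mul (by norm_num) (by linarith), Real.logb_self_eq_one (by norm_num)]; rfl
    rw [← this]
    exact Real.logb_le_logb_of_le (by norm_num) (by linarith) (by linarith)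
  nlinarith

theorem gl_count {l n : ℕ} {C : ℝ} (hC : 1 ≤ C) (m : Fin l → ℕ)
    (hm : ∀ i, m i = 1 ∨ glog (m i) ≤ C) (hn : n = ∑ i, m i) :
    glog n ≤ glog l + C + 1 := by
  have hP : (2:ℝ) ≤ 2 ^ C := by
    calc (2:ℝ) = 2 ^ (1:ℝ) := by simp
      _ ≤ _ := Real.rpow_le_rpow_of_exponent_le (by norm_num) hC
  have h1 : ∀ i, (m i : ℝ) ≤ 2 * 2 ^ C := by
    intro i
    rcases hm i with h | h
    · rw [h]; push_cast; linarith
    · unfold glog at h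
      have h0 : (0:ℝ) ≤ m i := by positivity
      rw [Real.logb_le_iff_le_rpow (by norm_num) (by linarith)] at h
      linarith
  have h2 : (n:ℝ) ≤ l * (2 * 2 ^ C) := by
    rw [hn]; push_cast
    calc _ ≤ ∑ i : Fin l, (2 * 2 ^ C : ℝ) := Finset.sum_le_sum (fun i _ => h1 i)
      _ = _ := by simp
  have hl : (0:ℝ) ≤ l := by positivity
  have hn0 : (0:ℝ) ≤ n := by positivity
  have : Real.logb 2 ((1 + l/2) * 2 ^ C * 2) = glog l + C + 1 := by
    rw [Real.logb_mul (by positivity) (by norm_num), Real.logb_mul (by positivity) (by positivity),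
      Real.logb_self_eq_one (by norm_num), Real.logb_rpow (by norm_num) (by norm_num)]; rfl
  rw [← this, glog]
  apply Real.logb_le_logb_of_le (by norm_num) (by linarith)
  nlinarith

theorem proj_proj (A B : Finset ℕ) (x : c00) : proj A (proj B x) = proj (A ∩ B) x := by
  ext i
  simp only [proj, Finsupp.filter_apply, Finset.mem_inter]
  by_cases h1 : i ∈ A <;> by_cases h2 : i ∈ B <;> simp [h1, h2]

theorem supNorm_nonneg (x : c00) : 0 ≤ supNorm x := Real.iSup_nonneg (fun _ => abs_nonneg _)

section
variable {Nb : c00 → ℝ}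

theorem gn_nonneg (h : IsGNorm Nb) (x : c00) : 0 ≤ Nb x :=
  (supNorm_nonneg x).trans ((h.2 x).1 (Set.mem_insert _ _))

theorem gn_elem (h : IsGNorm Nb) (x : c00) {l : ℕ} (hl : 3 ≤ l) (E : Fin l → Finset ℕ)
    (hE : ∀ i j : Fin l, i < j → FLt (E i) (E j)) :
    (glog l)⁻¹ * ∑ i, Nb (proj (E i) x) ≤ Nb x :=
  (h.2 x).1 (Set.mem_insert_of_mem _ ⟨l, hl, E, hE, rfl⟩)

theorem gl_bdd (h : IsGNorm Nb) (x : c00) {l : ℕ} (hl : 3 ≤ l) :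
    BddAbove {s | ∃ E : Fin l → Finset ℕ, (∀ i j : Fin l, i < j → FLt (E i) (E j)) ∧
    s = (glog l)⁻¹ * ∑ i, Nb (proj (E i) x)} := by
  refine ⟨Nb x, ?_⟩
  rintro _ ⟨E, hE, rfl⟩
  exact gn_elem h x hl E hE

theorem gl_nonempty (x : c00) (l : ℕ) :
    {s | ∃ E : Fin l → Finset ℕ, (∀ i j : Fin l, i < j → FLt (E i) (E j)) ∧
    s = (glog l)⁻¹ * ∑ i, Nb (proj (E i) x)}.Nonempty :=
  ⟨_, fun _ => ∅, by simp [FLt], rfl⟩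

theorem gNormL_le (h : IsGNorm Nb) (x : c00) {l : ℕ} (hl : 3 ≤ l) : gNormL Nb l x ≤ Nb x := by
  apply csSup_le (gl_nonempty x l)
  rintro _ ⟨E, hE, rfl⟩
  exact gn_elem h x hl E hE

theorem three_le_of {r : ℝ} (hr : 3 ≤ r) {l : ℕ} (hl : r ≤ l) : 3 ≤ l := by
  exact_mod_cast hr.trans hl

theorem gR_bdd (h : IsGNorm Nb) (x : c00) {r : ℝ} (hr : 3 ≤ r) :
    BddAbove {s | ∃ l : ℕ, r ≤ (l : ℝ) ∧ s = gNormL Nb l x} := by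
  refine ⟨Nb x, ?_⟩
  rintro _ ⟨l, hl, rfl⟩
  exact gNormL_le h x (three_le_of hr hl)

theorem gR_nonempty (x : c00) (r : ℝ) :
    {s | ∃ l : ℕ, r ≤ (l : ℝ) ∧ s = gNormL Nb l x}.Nonempty := by
  obtain ⟨l, hl⟩ := exists_nat_ge r
  exact ⟨_, l, hl, rfl⟩

theorem gNormR_le (h : IsGNorm Nb) (x : c00) {r : ℝ} (hr : 3 ≤ r) : gNormR Nb r x ≤ Nb x := by
  apply max_le ((h.2 x).1 (Set.mem_insert _ _))
  apply csSup_le (gR_nonempty x r)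
  rintro _ ⟨l, hl, rfl⟩
  exact gNormL_le h x (three_le_of hr hl)

theorem gNormR_elem (h : IsGNorm Nb) (x : c00) {r : ℝ} (hr : 3 ≤ r) {l : ℕ} (hl : r ≤ l)
    (E : Fin l → Finset ℕ) (hE : ∀ i j : Fin l, i < j → FLt (E i) (E j)) :
    (glog l)⁻¹ * ∑ i, Nb (proj (E i) x) ≤ gNormR Nb r x := by
  refine le_trans ?_ (le_max_right _ _)
  refine le_trans ?_ (le_csSup (gR_bdd h x hr) ⟨l, hl, rfl⟩)
  exact le_csSup (gl_bdd h x (three_le_of hr hl)) ⟨E, hE, rfl⟩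

theorem gNormR_elem' (h : IsGNorm Nb) (x : c00) {r : ℝ} (hr : 3 ≤ r) {ι : Type}
    [Fintype ι] [LinearOrder ι] (hl : r ≤ Fintype.card ι)
    (E : ι → Finset ℕ) (hE : ∀ i j : ι, i < j → FLt (E i) (E j)) :
    ∑ i, Nb (proj (E i) x) ≤ glog (Fintype.card ι) * gNormR Nb r x := by
  let e := Fintype.orderIsoFinOfCardEq ι rfl
  have h1 := gNormR_elem h x hr hl (fun i => E (e i))
    (fun i j hij => hE _ _ (e.strictMono hij))
  have h2 : ∑ i, Nb (proj (E (e i)) x) = ∑ i, Nb (proj (E i) x) :=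
    Equiv.sum_comp e.toEquiv (fun i => Nb (proj (E i) x))
  rw [h2] at h1
  have := gl_five_quarter (three_le_of hr hl)
  rwa [inv_mul_le_iff₀ (by linarith)] at h1

/-- bad pieces split -/
theorem bad_split (h : IsGNorm Nb) (y : c00) {R : ℝ} (hR : 3 ≤ R) (hb : ¬ Nb y ≤ gNormR Nb R y) :
    ∃ m : ℕ, 3 ≤ m ∧ (m:ℝ) ≤ R ∧ ∃ G : Fin m → Finset ℕ,
      (∀ i j : Fin m, i < j → FLt (G i) (G j)) ∧
      9/10 * glog m * Nb y ≤ ∑ j, Nb (proj (G j) y) := by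
  push Not at hb
  have h0 : 0 ≤ supNorm y := supNorm_nonneg y
  have h1 : supNorm y ≤ gNormR Nb R y := le_max_left _ _
  have hlt : max (gNormR Nb R y) (9/10 * Nb y) < Nb y := max_lt hb (by linarith)
  obtain ⟨s, hs, hs1, -⟩ := (h.2 y).exists_between hlt
  have hs2 := (le_max_left _ _).trans_lt hs1
  have hs3 := (le_max_right _ _).trans_lt hs1
  rcases hs with rfl | ⟨m, hm, G, hG, rfl⟩
  · linarith
  · refine ⟨m, hm, ?_, G, hG, ?_⟩
    · by_contra hc
      push Not at hc
      have := gNormR_elem h y hR hc.le G hG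
      linarith
    · have := gl_five_quarter hm
      rw [lt_inv_mul_iff₀ (by linarith)] at hs3
      linarith

theorem core (h : IsGNorm Nb) (x : c00) {r : ℝ} (hr : 3 ≤ r) {l : ℕ} (hl : r ≤ l)
    (E : Fin l → Finset ℕ) (hE : ∀ i j : Fin l, i < j → FLt (E i) (E j))
    (δ B C : ℝ) (hC : 1 ≤ C)
    (hM : (1 - δ) * gNormR Nb r x * glog l ≤ ∑ i, Nb (proj (E i) x))
    (A : Finset (Fin l))
    (hA : ∀ i ∈ A, ∃ m : ℕ, 3 ≤ m ∧ B ≤ glog m ∧ glog m ≤ C ∧ ∃ G : Fin m → Finset ℕ,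
      (∀ i j : Fin m, i < j → FLt (G i) (G j)) ∧
      9/10 * glog m * Nb (proj (E i) x) ≤ ∑ j, Nb (proj (G j) (proj (E i) x))) :
    B / 10 * ∑ i ∈ A, Nb (proj (E i) x) ≤
      gNormR Nb r x * (C + 1) + δ * gNormR Nb r x * glog l := by
  classical
  have key : ∀ i, ∃ m : ℕ, 1 ≤ m ∧ (m = 1 ∨ glog m ≤ C) ∧ ∃ G : Fin m → Finset ℕ,
      (∀ j, G j ⊆ E i) ∧ (∀ j k : Fin m, j < k → FLt (G j) (G k)) ∧
      Nb (proj (E i) x) + (if i ∈ A then B / 10 * Nb (proj (E i) x) else 0)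
        ≤ ∑ j, Nb (proj (G j) x) := by
    intro i
    by_cases hi : i ∈ A
    · obtain ⟨m, hm, hB, hC', G, hG, hs⟩ := hA i hi
      refine ⟨m, by omega, Or.inr hC', fun j => G j ∩ E i, fun j => Finset.inter_subset_right,
        ?_, ?_⟩
      · intro j k hjk a ha b hb
        exact hG j k hjk a (Finset.mem_inter.1 ha).1 b (Finset.mem_inter.1 hb).1
      · simp only [hi, if_true]
        simp only [proj_proj] at hs
        refine le_trans ?_ hs
        have h5 := gl_five_quarter hm
        have h0 := gn_nonneg h (proj (E i) x)
        nlinarith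
    · refine ⟨1, le_rfl, Or.inl rfl, fun _ => E i, fun _ => subset_rfl, ?_, ?_⟩
      · intro j k hjk
        omega
      · simp [hi]
  choose m hm1 hm2 G hG1 hG2 hG3 using key
  have hcard : Fintype.card (Σₗ i : Fin l, Fin (m i)) = ∑ i, m i := by
    have : Fintype.card (Σₗ i : Fin l, Fin (m i)) = Fintype.card (Σ i : Fin l, Fin (m i)) :=
      Fintype.card_congr (ofLex)
    rw [this]; simp
  have hlc : l ≤ ∑ i, m i := by
    calc l = ∑ i : Fin l, 1 := by simp
      _ ≤ _ := Finset.sum_le_sum (fun i _ => hm1 i)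
  have h1 := gNormR_elem' h x hr (ι := Σₗ i : Fin l, Fin (m i))
    (by rw [hcard]; exact hl.trans (by exact_mod_cast hlc))
    (fun p => G (ofLex p).1 (ofLex p).2) (by
      intro p q hpq
      obtain ⟨i, j⟩ := p
      obtain ⟨i', j'⟩ := q
      rcases Sigma.Lex.lt_def.1 hpq with hlt | ⟨heq, hlt⟩
      · intro a ha b hb
        exact hE i i' hlt a (hG1 i j ha) b (hG1 i' j' hb)
      · dsimp at heq
        subst heq
        exact hG2 i j j' hlt)
  have h2 : ∑ p : (Σₗ i : Fin l, Fin (m i)), Nb (proj (G (ofLex p).1 (ofLex p).2) x)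
      = ∑ i, ∑ j, Nb (proj (G i j) x) := by
    rw [← Fintype.sum_sigma' (fun i j => Nb (proj (G i j) x))]
    exact Equiv.sum_comp (ofLex : (Σₗ i : Fin l, Fin (m i)) ≃ _)
      (fun p => Nb (proj (G p.1 p.2) x))
  rw [h2, hcard] at h1
  have h3 : ∑ i, (Nb (proj (E i) x) + (if i ∈ A then B / 10 * Nb (proj (E i) x) else 0))
      ≤ ∑ i, ∑ j, Nb (proj (G i j) x) := Finset.sum_le_sum (fun i _ => hG3 i)
  rw [Finset.sum_add_distrib, Finset.sum_ite_mem, Finset.univ_inter, ← Finset.mul_sum] at h3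
  have h4 := gl_count hC m hm2 rfl
  have h5 : 0 ≤ gNormR Nb r x := (supNorm_nonneg x).trans (le_max_left _ _)
  have h6 := mul_le_mul_of_nonneg_right h4 h5
  nlinarith

end

/-- the analogue of Lemma 2.6 for the norm implicitly defined via
`g(x) = log₂(1 + x/2)` with `ℓ ≥ 3`. -/
theorem g_character_lemma
    (Nb : c00 → ℝ) (hNb : IsGNorm Nb) :
    ∃ d : ℝ, 1 < d ∧ ∀ r : ℝ, 3 ≤ r → d ^ 2 < glog r →
      ∀ x : c00, gNormR Nb r x ≠ supNorm x →
        gNormR Nb r x ≤ (1 - d / Real.sqrt (glog r))⁻¹ *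
          sSup {s | ∃ l : ℕ, r ≤ (l : ℝ) ∧ ∃ E : Fin l → Finset ℕ,
            (∀ i j : Fin l, i < j → FLt (E i) (E j)) ∧
            s = (glog l)⁻¹ * ∑ i, gNormR Nb (r ^ glog r) (proj (E i) x)} := by
  classical
  refine ⟨161, by norm_num, ?_⟩
  intro r hr hd x hx
  obtain ⟨hgR, hrR⟩ := gl_R hr (by linarith)
  set s := Real.sqrt (glog r) with hs
  set R := r ^ glog r with hRdef
  have hs2 : s ^ 2 = glog r := Real.sq_sqrt (by linarith)
  have hs161 : 161 < s := Real.lt_sqrt_of_sq_lt hd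
  have hs0 : 0 < s := by linarith
  have hR3 : 3 ≤ R := hr.trans hrR
  have hpos : 0 < 1 - 161 / s := by
    rw [sub_pos, div_lt_one hs0]; exact hs161
  rw [le_inv_mul_iff₀ hpos]
  set T := {s | ∃ l : ℕ, r ≤ (l : ℝ) ∧ ∃ E : Fin l → Finset ℕ,
            (∀ i j : Fin l, i < j → FLt (E i) (E j)) ∧
            s = (glog l)⁻¹ * ∑ i, gNormR Nb R (proj (E i) x)} with hT
  have hTb : BddAbove T := by
    refine ⟨Nb x, ?_⟩
    rintro _ ⟨l, hl, E, hE, rfl⟩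
    refine le_trans ?_ (gn_elem hNb x (three_le_of hr hl) E hE)
    have := gl_five_quarter (three_le_of hr hl)
    apply mul_le_mul_of_nonneg_left _ (by positivity)
    exact Finset.sum_le_sum (fun i _ => gNormR_le hNb _ hR3)
  set M := gNormR Nb r x with hMdef
  have hMsup : M = sSup {s | ∃ l : ℕ, r ≤ (l : ℝ) ∧ s = gNormL Nb l x} := by
    rcases max_choice (supNorm x) (sSup {s | ∃ l : ℕ, r ≤ (l : ℝ) ∧ s = gNormL Nb l x}) with h | h
    · exact absurd h hx
    · exact h
  have hM0 : 0 < M := by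
    have h1 : supNorm x ≤ M := le_max_left _ _
    exact (supNorm_nonneg x).trans_lt (lt_of_le_of_ne h1 (Ne.symm hx))
  have hlt : (1 - 1/s) * M < M := by
    have : 0 < 1 / s := by positivity
    nlinarith
  obtain ⟨_, ⟨l, hl, rfl⟩, hlt2⟩ := exists_lt_of_lt_csSup (gR_nonempty x r) (hlt.trans_eq hMsup)
  obtain ⟨_, ⟨E, hE, rfl⟩, hlt3⟩ := exists_lt_of_lt_csSup (gl_nonempty x l) hlt2
  have hl3 := three_le_of hr hl
  have hgl : 0 < glog l := by linarith [gl_five_quarter hl3]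
  have hglr : s ^ 2 ≤ glog l := by rw [hs2]; exact gl_mono (by linarith) hl
  rw [lt_inv_mul_iff₀ hgl] at hlt3
  have hsum : (1 - 1/s) * M * glog l ≤ ∑ i, Nb (proj (E i) x) := by linarith
  -- bad indices
  let P : Fin l → ℕ → Prop := fun i k =>
    ∃ m : ℕ, 3 ≤ m ∧ s ^ k ≤ glog m ∧ glog m ≤ 2 * s ^ (k+1) ∧ ∃ G : Fin m → Finset ℕ,
      (∀ i j : Fin m, i < j → FLt (G i) (G j)) ∧
      9/10 * glog m * Nb (proj (E i) x) ≤ ∑ j, Nb (proj (G j) (proj (E i) x))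
  have hgroup : ∀ k, ∑ i, (if P i k then Nb (proj (E i) x) else 0) ≤ 40 * (M * glog l / s) := by
    intro k
    have hk1 : 1 ≤ s ^ k := one_le_pow₀ (by linarith)
    have h1 := core hNb x hr hl E hE (1/s) (s^k) (2 * s^(k+1))
      (by rw [pow_succ]; nlinarith) hsum (Finset.univ.filter (fun i => P i k))
      (by intro i hi; exact (Finset.mem_filter.1 hi).2)
    rw [Finset.sum_filter] at h1
    set Q := ∑ i, (if P i k then Nb (proj (E i) x) else 0)
    rw [← hMdef] at h1
    have h2 : M * s ≤ M * glog l / s := by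
      rw [le_div_iff₀ hs0]; nlinarith
    have e1 : 1 / s * M * glog l = M * glog l / s := by ring
    rw [e1] at h1
    set V := M * glog l / s
    have hV : 0 ≤ V := by positivity
    have h3 : M * (2 * s^(k+1) + 1) ≤ 3 * (s^k * V) := by
      have : (2 * s^(k+1) + 1) ≤ 3 * (s ^ k * s) := by rw [pow_succ]; nlinarith
      nlinarith [mul_le_mul_of_nonneg_left h2 (by linarith : 0 ≤ s^k),
        mul_le_mul_of_nonneg_left this hM0.le]
    have h4 : s^k * Q ≤ s^k * (40 * V) := by nlinarith
    exact le_of_mul_le_mul_left h4 (by linarith)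
  have hpt : ∀ i, Nb (proj (E i) x) ≤ gNormR Nb R (proj (E i) x) +
      ∑ k ∈ Finset.range 4, (if P i k then Nb (proj (E i) x) else 0) := by
    intro i
    have hn := gn_nonneg hNb (proj (E i) x)
    have hnn : ∀ k ∈ Finset.range 4, 0 ≤ (if P i k then Nb (proj (E i) x) else 0) := by
      intro k _; split_ifs <;> simp [hn]
    by_cases hb : Nb (proj (E i) x) ≤ gNormR Nb R (proj (E i) x)
    · have := Finset.sum_nonneg hnn
      linarith
    · have hR0 : 0 ≤ gNormR Nb R (proj (E i) x) := (supNorm_nonneg _).trans (le_max_left _ _)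
      obtain ⟨m, hm, hmR, G, hG, hGs⟩ := bad_split hNb (proj (E i) x) hR3 hb
      have hg5 := gl_five_quarter hm
      have hgm : glog m ≤ 2 * s ^ 4 := by
        have := gl_mono (by positivity) hmR
        rw [← hs2] at hgR
        nlinarith
      have hex : ∃ k ∈ Finset.range 4, P i k := by
        have build : ∀ k, s ^ k ≤ glog m → glog m ≤ 2 * s ^ (k+1) → P i k :=
          fun k h1 h2 => ⟨m, hm, h1, h2, G, hG, hGs⟩
        have hp : ∀ k, 0 < s ^ k := fun k => by positivity
        by_cases c1 : s ^ 3 ≤ glog m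
        · exact ⟨3, by simp, build 3 c1 hgm⟩
        by_cases c2 : s ^ 2 ≤ glog m
        · exact ⟨2, by simp, build 2 c2 (by norm_num; linarith [hp 3])⟩
        by_cases c3 : s ^ 1 ≤ glog m
        · exact ⟨1, by simp, build 1 c3 (by norm_num; linarith [hp 2])⟩
        · exact ⟨0, by simp, build 0 (by simp; linarith) (by norm_num at c3 ⊢; linarith)⟩
      obtain ⟨k, hk, hPk⟩ := hex
      have := Finset.single_le_sum hnn hk
      rw [if_pos hPk] at this
      linarith
  have htot := Finset.sum_le_sum (fun i (_ : i ∈ Finset.univ) => hpt i)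
  rw [Finset.sum_add_distrib, Finset.sum_comm] at htot
  have hbad := Finset.sum_le_sum (fun k (_ : k ∈ Finset.range 4) => hgroup k)
  rw [Finset.sum_const, Finset.card_range] at hbad
  have hS : (glog l)⁻¹ * ∑ i, gNormR Nb R (proj (E i) x) ≤ sSup T :=
    le_csSup hTb ⟨l, hl, E, hE, rfl⟩
  rw [inv_mul_le_iff₀ hgl] at hS
  have hfin : glog l * ((1 - 161 / s) * M) ≤ glog l * sSup T := by
    have e : glog l * ((1 - 161 / s) * M) = (1 - 1/s) * M * glog l - 160 * (M * glog l / s) := by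
      ring
    rw [e]
    norm_num at hbad
    linarith
  exact le_of_mul_le_mul_left hfin hgl
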